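/- The hypergraph on 33 vertices {1,...,9,A,...,X} with the 40 hyperedges 123, 147, 456, 5QR, 6ST, 789, 8MN, 9OP, AT, 1AB, BN, BO, 1CD, CR, CS, DM, DP, 4EF, FM, FO, 4GH, HN, HP, 7IJ, JS, 7KL, LR, LT, AQ, JQ, EU, KU, 2UV, GV, IV, GW, KW, 3WX, EX, IX (the Peres P-33 set, i.e. the 33-40 set) admits no admissible {0,1}-assignment, but it is NOT critical: there exists a hyperedge whose deletion yields a hypergraph that still admits no admissible {0,1}-assignment. -/

import Mathlib

def peres3340 : List (Finset ℕ) :=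
  [{1, 2, 3},
   {1, 4, 7},
   {4, 5, 6},
   {5, 26, 27},
   {6, 28, 29},
   {7, 8, 9},
   {8, 22, 23},
   {9, 24, 25},
   {10, 29},
   {1, 10, 11},
   {11, 23},
   {11, 24},
   {1, 12, 13},
   {12, 27},
   {12, 28},
   {13, 22},
   {13, 25},
   {4, 14, 15},
   {15, 22},
   {15, 24},
   {4, 16, 17},
   {17, 23},
   {17, 25},
   {7, 18, 19},
   {19, 28},
   {7, 20, 21},
   {21, 27},
   {21, 29},
   {10, 26},
   {19, 26},
   {14, 30},
   {20, 30},
   {2, 30, 31},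
   {16, 31},
   {18, 31},
   {16, 32},
   {20, 32},
   {3, 32, 33},
   {14, 33},
   {18, 33}]

def admissible (E : List (Finset ℕ)) (f : ℕ → Bool) : Prop :=
  ∀ e ∈ E, (e.filter (fun v => f v = true)).card = 1

/-!
If two vertices of a hyperedge have the same value, that value is 0, since the hyperedge contains
only one 1. Two doubletons sharing a vertex force their other endpoints to agree, so JQ, JS, CS, CR
give `f Q = f S = f R` and AQ, AT give `f Q = f T`. Hence 5QR forces `f 5 = 1` and 6ST forces
`f 6 = 1`, contradicting 456. Only these nine hyperedges are involved, so any other one can be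
deleted.
-/

section ExactlyOneTrue

variable {α : Type*} {f : α → Bool}

lemma eq_false_of_eq_of_existsUnique {e : Finset α} {a b : α} (h : ∃! v, v ∈ e ∧ f v = true)
    (ha : a ∈ e) (hb : b ∈ e) (hab : a ≠ b) (hf : f a = f b) : f a = false := by
  refine Bool.eq_false_of_not_eq_true fun hfa => ?_
  exact hab (h.unique ⟨ha, hfa⟩ ⟨hb, hf ▸ hfa⟩)

variable [DecidableEq α] {a b x : α}

lemma ne_of_existsUnique_mem_pair (h : ∃! v, v ∈ ({a, b} : Finset α) ∧ f v = true)
    (hab : a ≠ b) : f a ≠ f b := by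
  intro hf
  have hfa : f a = false := eq_false_of_eq_of_existsUnique h (by simp) (by simp) hab hf
  obtain ⟨v, hv, hfv⟩ := h.exists
  simp only [Finset.mem_insert, Finset.mem_singleton] at hv
  rcases hv with rfl | rfl
  · exact ne_true_of_eq_false hfa hfv
  · exact ne_true_of_eq_false hfa (hf.trans hfv)

lemma eq_of_existsUnique_mem_pair_of_pair (ha : ∃! v, v ∈ ({x, a} : Finset α) ∧ f v = true)
    (hb : ∃! v, v ∈ ({x, b} : Finset α) ∧ f v = true) (hxa : x ≠ a) (hxb : x ≠ b) :
    f a = f b :=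
  Bool.not_inj <| calc
    (!f a) = f x := (Bool.eq_not.mpr (ne_of_existsUnique_mem_pair ha hxa)).symm
    _ = !f b := Bool.eq_not.mpr (ne_of_existsUnique_mem_pair hb hxb)

lemma eq_true_of_existsUnique_mem_triple (h : ∃! v, v ∈ ({x, a, b} : Finset α) ∧ f v = true)
    (hab : a ≠ b) (hf : f a = f b) : f x = true := by
  have hfa : f a = false := eq_false_of_eq_of_existsUnique h (by simp) (by simp) hab hf
  obtain ⟨v, hv, hfv⟩ := h.exists
  simp only [Finset.mem_insert, Finset.mem_singleton] at hv
  rcases hv with rfl | rfl | rfl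
  · exact hfv
  · exact absurd hfv (ne_true_of_eq_false hfa)
  · exact absurd (hf.trans hfv) (ne_true_of_eq_false hfa)

end ExactlyOneTrue

namespace admissible

variable {E : List (Finset ℕ)} {f : ℕ → Bool}

lemma mono {E' : List (Finset ℕ)} (h : admissible E' f) (hE : E ⊆ E') : admissible E f :=
  fun e he => h e (hE he)

lemma existsUnique (h : admissible E f) {e : Finset ℕ} (he : e ∈ E) :
    ∃! v, v ∈ e ∧ f v = true := by
  simpa only [Finset.mem_filter] using Finset.card_eq_one_iff_existsUnique.mp (h e he)

end admissible

/-- The nine hyperedges 456, 5QR, 6ST, AQ, AT, CR, CS, JQ, JS of the 33-40 set, which already admit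
no admissible assignment. The labels A, B, … are encoded as 10, 11, …; in particular
A = 10, C = 12, J = 19, Q = 26, R = 27, S = 28, T = 29. -/
def peresObstruction : List (Finset ℕ) :=
  [{4, 5, 6}, {5, 26, 27}, {6, 28, 29}, {10, 26}, {10, 29}, {12, 27}, {12, 28}, {19, 26}, {19, 28}]

lemma not_admissible_peresObstruction (f : ℕ → Bool) : ¬ admissible peresObstruction f := by
  intro h
  have eq_of_pairs {x a b : ℕ} (ha : {x, a} ∈ peresObstruction) (hb : {x, b} ∈ peresObstruction)
      (hxa : x ≠ a) (hxb : x ≠ b) : f a = f b :=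
    eq_of_existsUnique_mem_pair_of_pair (h.existsUnique ha) (h.existsUnique hb) hxa hxb
  have hQS : f 26 = f 28 := eq_of_pairs (x := 19) (by decide) (by decide) (by decide) (by decide)
  have hSR : f 28 = f 27 := eq_of_pairs (x := 12) (by decide) (by decide) (by decide) (by decide)
  have hQT : f 26 = f 29 := eq_of_pairs (x := 10) (by decide) (by decide) (by decide) (by decide)
  have h5 : f 5 = true :=
    eq_true_of_existsUnique_mem_triple (h.existsUnique (e := {5, 26, 27}) (by decide))
      (by decide) (hQS.trans hSR)
  have h6 : f 6 = true :=
    eq_true_of_existsUnique_mem_triple (h.existsUnique (e := {6, 28, 29}) (by decide))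
      (by decide) (hQS.symm.trans hQT)
  have h456 : ∃! v, v ∈ ({4, 5, 6} : Finset ℕ) ∧ f v = true := h.existsUnique (by decide)
  exact absurd (h456.unique ⟨by decide, h5⟩ ⟨by decide, h6⟩) (by decide : 5 ≠ 6)

lemma not_exists_admissible_of_peresObstruction_subset {E : List (Finset ℕ)}
    (hE : peresObstruction ⊆ E) : ¬ ∃ f : ℕ → Bool, admissible E f :=
  fun ⟨f, hf⟩ => not_admissible_peresObstruction f (hf.mono hE)

theorem peres3340_KS_not_critical :
    (¬ ∃ f : ℕ → Bool, admissible peres3340 f) ∧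
    ∃ e ∈ peres3340, ¬ ∃ f : ℕ → Bool,
      ∀ e' ∈ peres3340, e' ≠ e → (e'.filter (fun v => f v = true)).card = 1 := by
  refine ⟨not_exists_admissible_of_peresObstruction_subset (by decide), {1, 2, 3}, by decide, ?_⟩
  rintro ⟨f, hf⟩
  have hdel : admissible (peres3340.filter (· ≠ {1, 2, 3})) f := fun e he => by
    obtain ⟨he, hne⟩ := List.mem_filter.mp he
    exact hf e he (of_decide_eq_true hne)
  exact not_exists_admissible_of_peresObstruction_subset (by decide) ⟨f, hdel⟩
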